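/- Let m be a prime; for each prime q ≤ m fix k_q ∈ {1,…,q−1}, an integer j_q ≥ 0, a_q ∈ I_q, and γ_q ∈ ℂ. Define Ψ ∈ L²(Ã, μ̃) by Ψ(x) = ∏_{q≤m} ψ^{(0)}_{k_q; j_q a_q}(x_q) · ∏_{q>m} 1_{ℤ_q}(x_q), and let D^γΨ := 𝓕̃^{−1}[𝒜 · 𝓕̃Ψ], where 𝒜(ξ) = ∏_{q≤m} |ξ_q|_q^{γ_q} · ∏_{q>m} 1_{ℤ_q}(ξ_q) (with t^γ := exp(γ log t) for t > 0). Then D^γΨ = (∏_{q≤m} q^{γ_q(j_q+1)}) · Ψ. In particular, if γ_q = γ for all q ≤ m, then D^γΨ = (∏_{q≤m} q^{j_q+1})^γ · Ψ. -/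

import Mathlib

open MeasureTheory Complex
open scoped Classical

noncomputable section

variable (p : ℕ) [Fact p.Prime]

instance : MeasurableSpace ℚ_[p] := borel _
instance : BorelSpace ℚ_[p] := ⟨rfl⟩

instance (q : Nat.Primes) : Fact (q : ℕ).Prime := ⟨q.2⟩

/-- The indicator function of `ℤ_p` inside `ℚ_p`. -/
def indZ (x : ℚ_[p]) : ℂ := if ‖x‖ ≤ 1 then 1 else 0

/-- The fractional part of a `p`-adic number: the unique rational `r ∈ ℤ[1/p] ∩ [0,1)`
with `x - r ∈ ℤ_p`. -/
def padicFract (x : ℚ_[p]) : ℚ :=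
  if h : ∃ r : ℚ, (0 ≤ r ∧ r < 1 ∧ ∃ (m : ℤ) (n : ℕ), r = m / p ^ n) ∧ ‖x - (r : ℚ_[p])‖ ≤ 1
  then h.choose else 0

/-- The standard additive character `χ_p` of `ℚ_p`. -/
def padicChar (x : ℚ_[p]) : ℂ := Complex.exp (2 * Real.pi * Complex.I * (padicFract p x : ℂ))

/-- The Kozyrev wavelet `ψ⁰_{k;ja}`. -/
def kozyrev (k : ℕ) (j : ℤ) (a : ℚ_[p]) (x : ℚ_[p]) : ℂ :=
  ((p : ℝ) ^ ((j : ℝ) / 2) : ℝ) *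
    padicChar p ((k : ℚ_[p]) / (p : ℚ_[p]) * ((p : ℚ_[p]) ^ (-j) * x - a)) *
    indZ p ((p : ℚ_[p]) ^ (-j) * x - a)

/-- The set `I_p = ℤ[1/p] ∩ [0,1)` of shifts, viewed inside `ℚ_p`. -/
def Ip : Set ℚ_[p] := {a | ∃ (m n : ℕ), m < p ^ n ∧ a = (m : ℚ_[p]) / (p : ℚ_[p]) ^ n}

/-- The finite adele ring of `ℚ`: the restricted product of the fields `ℚ_p` with respect
to the subrings `ℤ_p`. -/
def FiniteAdele : Type :=
  {x : ∀ q : Nat.Primes, ℚ_[(q : ℕ)] // ∀ᶠ q : Nat.Primes in Filter.cofinite, ‖x q‖ ≤ 1}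

instance : MeasurableSpace FiniteAdele := by unfold FiniteAdele; infer_instance

/-- The standard additive character `χ̃` of `Ã`, evaluated at `ξ·x`:
`χ̃(ξ·x) = ∏_q χ_q(ξ_q x_q)`. -/
def chiTilde (ξ x : FiniteAdele) : ℂ :=
  ∏' q : Nat.Primes, padicChar q (ξ.1 q * x.1 q)

/-- The Fourier transform on `Ã`: `𝓕̃f(ξ) = ∫ χ̃(ξ·x) f(x) dμ̃(x)` (as an integral; on
`L¹ ∩ L²` it agrees with the unitary `L²` Fourier transform). -/
def Ftilde (μ : MeasureTheory.Measure FiniteAdele) (f : FiniteAdele → ℂ)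
    (ξ : FiniteAdele) : ℂ :=
  ∫ x, chiTilde ξ x * f x ∂μ

/-- The inverse Fourier transform on `Ã`: `𝓕̃⁻¹f(x) = ∫ χ̃(-ξ·x) f(ξ) dμ̃(ξ)`. -/
def FtildeInv (μ : MeasureTheory.Measure FiniteAdele) (f : FiniteAdele → ℂ)
    (x : FiniteAdele) : ℂ :=
  ∫ ξ, (∏' q : Nat.Primes, padicChar q (-(ξ.1 q * x.1 q))) * f ξ ∂μ

/-- The adelic wavelet `Ψ(x) = ∏_{q ≤ m} ψ⁰_{k_q;j_q a_q}(x_q) ∏_{q > m} 1_{ℤ_q}(x_q)`. -/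
def PsiWav (m : Nat.Primes) (k : Nat.Primes → ℕ) (j : Nat.Primes → ℤ)
    (a : ∀ q : Nat.Primes, ℚ_[(q : ℕ)]) (x : FiniteAdele) : ℂ :=
  ∏' q : Nat.Primes,
    (if (q : ℕ) ≤ (m : ℕ) then kozyrev q (k q) (j q) (a q) (x.1 q)
     else indZ q (x.1 q))


/-- The symbol of the fractional operator `D^γ`:
`𝒜(ξ) = ∏_{q ≤ m} |ξ_q|_q^{γ_q} ∏_{q > m} 1_{ℤ_q}(ξ_q)`. -/
def symbGamma (m : Nat.Primes) (γ : Nat.Primes → ℂ) (ξ : FiniteAdele) : ℂ :=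
  ∏' q : Nat.Primes,
    (if (q : ℕ) ≤ (m : ℕ) then ((‖ξ.1 q‖ : ℝ) : ℂ) ^ (γ q) else indZ q (ξ.1 q))

/-!
The wavelet and the symbol are products over the primes, and so are the Fourier transforms of such
functions, so everything happens one prime at a time. The Fourier transform of `ψ⁰_{k;ja}` vanishes
off the sphere `|ξ|_p = p ^ (j + 1)`, because `|k / p|_p = p` is too large to be absorbed by a
translation in `ℤ_p`; on that sphere `|ξ|_p ^ γ` is the constant `p ^ (γ (j + 1))`. It remains to
invert the Fourier transform. The indicator of `ℤ_p` is its own Fourier transform, and the functions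
satisfying the inversion formula are closed under modulation, translation, dilation and scalar
multiplication, which produce every wavelet from that indicator.
-/

open Filter

section HaarDilation

variable {G A E : Type*} [Group G] [AddCommGroup A] [DistribMulAction G A] [TopologicalSpace A]
  [IsTopologicalAddGroup A] [LocallyCompactSpace A] [ContinuousConstSMul G A] [MeasurableSpace A]
  [BorelSpace A] [NormedAddCommGroup E] [NormedSpace ℝ E]

theorem integral_comp_smul_eq_distribHaarChar_inv_smul (ν : Measure A) [ν.IsAddHaarMeasure]
    [ν.Regular] (g : G) (f : A → E) :
    ∫ x, f (g • x) ∂ν = (distribHaarChar A g)⁻¹ • ∫ x, f x ∂ν := by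
  have smul_eq : DomMulAct.mk g⁻¹ • ν = (distribHaarChar A g)⁻¹ • ν := by
    rw [← map_inv, ← addHaarScalarFactor_smul_eq_distribHaarChar ν,
      ← Measure.isAddLeftInvariant_eq_smul_of_regular]
  rw [← integral_smul_nnreal_measure, ← smul_eq, integral_domSMul]
  simp

end HaarDilation

variable {p}

section Character

variable (p) in
/-- The additive group `ℤ[1/p]` of rationals whose denominator is a power of `p`. -/
def intAdjoinInv : AddSubgroup ℚ where
  carrier := {r | ∃ (m : ℤ) (n : ℕ), r = m / p ^ n}
  zero_mem' := ⟨0, 0, by simp⟩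
  add_mem' := by
    have hp : (p : ℚ) ≠ 0 := mod_cast (Fact.out : p.Prime).ne_zero
    rintro _ _ ⟨m, n, rfl⟩ ⟨m', n', rfl⟩
    exact ⟨m * p ^ n' + m' * p ^ n, n + n', by push_cast; field_simp; ring⟩
  neg_mem' := by
    rintro _ ⟨m, n, rfl⟩
    exact ⟨-m, n, by push_cast; ring⟩

theorem exists_intCast_eq_of_mem_intAdjoinInv {r : ℚ} (hr : r ∈ intAdjoinInv p)
    (hr_norm : ‖(r : ℚ_[p])‖ ≤ 1) : ∃ z : ℤ, (z : ℚ) = r := by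
  obtain ⟨m, n, rfl⟩ := hr
  have hp : p ≠ 0 := (Fact.out : p.Prime).ne_zero
  have m_norm : ‖(m : ℚ_[p])‖ ≤ (p : ℝ) ^ (-n : ℤ) := by
    have : (m : ℚ_[p]) = ((m / p ^ n : ℚ) : ℚ_[p]) * (p : ℚ_[p]) ^ n := by
      push_cast
      rw [div_mul_cancel₀ _ (pow_ne_zero n (mod_cast hp))]
    rw [this, norm_mul, Padic.norm_p_pow]
    exact mul_le_of_le_one_left (by positivity) hr_norm
  obtain ⟨z, rfl⟩ := (Padic.norm_int_le_pow_iff_dvd m n).1 m_norm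
  exact ⟨z, by push_cast; field_simp⟩

theorem exists_mem_intAdjoinInv_norm_sub_le_one (x : ℚ_[p]) :
    ∃ r : ℚ, (0 ≤ r ∧ r < 1 ∧ r ∈ intAdjoinInv p) ∧ ‖x - (r : ℚ_[p])‖ ≤ 1 := by
  have hp : 0 < p := (Fact.out : p.Prime).pos
  obtain ⟨n, hn⟩ := pow_unbounded_of_one_lt ‖x‖
    (mod_cast (Fact.out : p.Prime).one_lt : (1 : ℝ) < p)
  have numer_norm : ‖x * (p : ℚ_[p]) ^ n‖ ≤ 1 := by
    rw [norm_mul, Padic.norm_p_pow, zpow_neg, zpow_natCast]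
    exact mul_inv_le_one_of_le₀ hn.le (by positivity)
  let z : ℤ_[p] := ⟨x * (p : ℚ_[p]) ^ n, numer_norm⟩
  have appr_norm : ‖(z : ℚ_[p]) - z.appr n‖ ≤ (p : ℝ) ^ (-n : ℤ) := by
    simpa [PadicInt.norm_def] using
      (PadicInt.norm_le_pow_iff_mem_span_pow _ n).2 (PadicInt.appr_spec n z)
  refine ⟨z.appr n / p ^ n, ⟨by positivity, ?_, z.appr n, n, by simp⟩, ?_⟩
  · rw [div_lt_one (by positivity)]
    exact_mod_cast z.appr_lt n
  · have : x - ((z.appr n / p ^ n : ℚ) : ℚ_[p]) = (z - z.appr n) * (p : ℚ_[p]) ^ (-n : ℤ) := by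
      have hp' : (p : ℚ_[p]) ^ n ≠ 0 := pow_ne_zero n (mod_cast hp.ne')
      rw [zpow_neg, zpow_natCast, ← div_eq_mul_inv, sub_div, mul_div_cancel_right₀ x hp']
      push_cast
      rfl
    rw [this, norm_mul, Padic.norm_p_zpow, neg_neg]
    calc _ ≤ (p : ℝ) ^ (-n : ℤ) * (p : ℝ) ^ (n : ℤ) := by gcongr
      _ = 1 := by rw [zpow_neg, inv_mul_cancel₀ (by positivity)]

theorem padicFract_spec (x : ℚ_[p]) :
    padicFract p x ∈ intAdjoinInv p ∧ ‖x - (padicFract p x : ℚ_[p])‖ ≤ 1 := by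
  have h := exists_mem_intAdjoinInv_norm_sub_le_one x
  rw [show padicFract p x = h.choose from dif_pos h]
  exact ⟨h.choose_spec.1.2.2, h.choose_spec.2⟩

theorem padicChar_eq_exp {x : ℚ_[p]} {r : ℚ} (hr : r ∈ intAdjoinInv p)
    (hxr : ‖x - (r : ℚ_[p])‖ ≤ 1) :
    padicChar p x = Complex.exp (2 * Real.pi * Complex.I * r) := by
  obtain ⟨fract_mem, fract_norm⟩ := padicFract_spec x
  have diff_norm : ‖((padicFract p x - r : ℚ) : ℚ_[p])‖ ≤ 1 := by
    have := (PadicInt.subring p).sub_mem hxr fract_norm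
    rwa [sub_sub_sub_cancel_left, ← Rat.cast_sub] at this
  obtain ⟨z, hz⟩ := exists_intCast_eq_of_mem_intAdjoinInv (sub_mem fract_mem hr) diff_norm
  have : (padicFract p x : ℂ) = r + z := mod_cast eq_add_of_sub_eq' hz.symm
  rw [padicChar, this, Complex.exp_eq_exp_iff_exists_int]
  exact ⟨z, by ring⟩

theorem padicChar_add (x y : ℚ_[p]) : padicChar p (x + y) = padicChar p x * padicChar p y := by
  obtain ⟨hx, hx_norm⟩ := padicFract_spec x
  obtain ⟨hy, hy_norm⟩ := padicFract_spec y
  have sum_norm : ‖x + y - ((padicFract p x + padicFract p y : ℚ) : ℚ_[p])‖ ≤ 1 := by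
    rw [Rat.cast_add, add_sub_add_comm]
    exact (PadicInt.subring p).add_mem hx_norm hy_norm
  rw [padicChar_eq_exp (add_mem hx hy) sum_norm, padicChar, padicChar, ← Complex.exp_add,
    Rat.cast_add, mul_add]

theorem padicChar_eq_one_of_norm_le_one {x : ℚ_[p]} (hx : ‖x‖ ≤ 1) : padicChar p x = 1 := by
  rw [padicChar_eq_exp (zero_mem _) (by simpa using hx)]
  simp

theorem padicChar_inv_natCast_ne_one : padicChar p (p : ℚ_[p])⁻¹ ≠ 1 := by
  have hp : p.Prime := Fact.out
  rw [padicChar_eq_exp (r := (p : ℚ)⁻¹) ⟨1, 1, by simp⟩ (by simp)]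
  simpa [div_eq_mul_inv] using (isPrimitiveRoot_exp p hp.ne_zero).ne_one hp.one_lt

theorem exists_padicChar_mul_ne_one {z : ℚ_[p]} (hz : 1 < ‖z‖) :
    ∃ t : ℚ_[p], ‖t‖ ≤ 1 ∧ padicChar p (t * z) ≠ 1 := by
  have hz₀ : z ≠ 0 := norm_pos_iff.1 (one_pos.trans hz)
  have p_le_norm : (p : ℝ) ≤ ‖z‖ := by
    simpa [hz] using (Padic.norm_lt_pow_iff_norm_le_pow_sub_one z 1).not
  refine ⟨(p : ℚ_[p])⁻¹ * z⁻¹, ?_, ?_⟩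
  · rw [norm_mul, norm_inv, norm_inv, Padic.norm_p, inv_inv]
    exact mul_inv_le_one_of_le₀ p_le_norm (norm_nonneg z)
  · rw [inv_mul_cancel_right₀ hz₀]
    exact padicChar_inv_natCast_ne_one

theorem continuous_padicChar : Continuous (padicChar p) := by
  refine ((IsLocallyConstant.iff_eventually_eq _).2 fun x => ?_).continuous
  filter_upwards [Metric.ball_mem_nhds x one_pos] with y hy
  have hyx : padicChar p (y - x) = 1 := padicChar_eq_one_of_norm_le_one (mem_ball_iff_norm.1 hy).le
  rw [← sub_add_cancel y x, padicChar_add, hyx, one_mul]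

end Character

section UnitBallIndicator

theorem indZ_of_norm_le_one {x : ℚ_[p]} (hx : ‖x‖ ≤ 1) : indZ p x = 1 := if_pos hx

theorem indZ_of_one_lt_norm {x : ℚ_[p]} (hx : 1 < ‖x‖) : indZ p x = 0 := if_neg hx.not_ge

theorem indZ_add_of_norm_le_one {t : ℚ_[p]} (ht : ‖t‖ ≤ 1) (y : ℚ_[p]) :
    indZ p (t + y) = indZ p y :=
  if_congr ((PadicInt.subring p).toAddSubgroup.add_mem_cancel_left ht) rfl rfl

theorem indZ_neg (x : ℚ_[p]) : indZ p (-x) = indZ p x := by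
  rw [indZ, norm_neg, indZ]

theorem indZ_mul_self (x : ℚ_[p]) : indZ p x * indZ p x = indZ p x := by
  simp [indZ]

theorem measurableSet_norm_le_one : MeasurableSet {x : ℚ_[p] | ‖x‖ ≤ 1} :=
  measurableSet_le measurable_norm measurable_const

theorem measurable_indZ : Measurable (indZ p) :=
  Measurable.ite measurableSet_norm_le_one measurable_const measurable_const

theorem padicChar_mul_indZ {x : ℚ_[p]} (hx : ‖x‖ ≤ 1) (y : ℚ_[p]) :
    padicChar p (x * y) * indZ p y = indZ p y := by
  obtain hy | hy := le_or_gt ‖y‖ 1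
  · rw [padicChar_eq_one_of_norm_le_one, one_mul]
    exact (PadicInt.subring p).mul_mem hx hy
  · rw [indZ_of_one_lt_norm hy, mul_zero]

theorem integral_indZ {ν : Measure ℚ_[p]} (hν : ν {x : ℚ_[p] | ‖x‖ ≤ 1} = 1) :
    ∫ x, indZ p x ∂ν = 1 := by
  have : indZ p = {x : ℚ_[p] | ‖x‖ ≤ 1}.indicator fun _ => 1 := by
    ext x
    simp [indZ, Set.indicator]
  simp [this, integral_indicator measurableSet_norm_le_one, measureReal_def, hν]

end UnitBallIndicator

section LocalFourier

/-- The Fourier transform `f̂(ξ) = ∫ χ_p(ξx) f(x) dν(x)` on `ℚ_p`, with the sign convention of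
`Ftilde`; the inverse transform is `x ↦ f̂(-x)`. -/
def padicFourier (ν : Measure ℚ_[p]) (f : ℚ_[p] → ℂ) (ξ : ℚ_[p]) : ℂ :=
  ∫ x, padicChar p (ξ * x) * f x ∂ν

/-- The inversion formula `f(x) = ∫ χ_p(-xξ) f̂(ξ) dν(ξ)`, required at every point. -/
def FourierInvertible (ν : Measure ℚ_[p]) (f : ℚ_[p] → ℂ) : Prop :=
  ∀ x, padicFourier ν (padicFourier ν f) (-x) = f x

variable {ν : Measure ℚ_[p]} {f : ℚ_[p] → ℂ}

theorem measurable_padicFourier [SFinite ν] (hf : Measurable f) :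
    Measurable (padicFourier ν f) := by
  have := (continuous_padicChar (p := p)).measurable
  exact (StronglyMeasurable.integral_prod_right (f := fun ξ x => padicChar p (ξ * x) * f x)
    (by fun_prop)).measurable

theorem padicFourier_const_mul (C : ℂ) :
    padicFourier ν (fun x => C * f x) = fun ξ => C * padicFourier ν f ξ := by
  ext ξ
  simp only [padicFourier, ← integral_const_mul, mul_left_comm]

theorem padicFourier_char_mul (b : ℚ_[p]) :
    padicFourier ν (fun x => padicChar p (b * x) * f x) = fun ξ => padicFourier ν f (ξ + b) := by
  ext ξ
  simp only [padicFourier, add_mul, padicChar_add, mul_assoc]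

theorem padicFourier_comp_sub [ν.IsAddRightInvariant] (a : ℚ_[p]) :
    padicFourier ν (fun x => f (x - a)) = fun ξ => padicChar p (a * ξ) * padicFourier ν f ξ := by
  ext ξ
  calc ∫ x, padicChar p (ξ * x) * f (x - a) ∂ν
      = ∫ x, padicChar p (ξ * (x + a)) * f x ∂ν := by
        rw [← integral_add_right_eq_self _ a]
        simp only [add_sub_cancel_right]
    _ = ∫ x, padicChar p (a * ξ) * (padicChar p (ξ * x) * f x) ∂ν := by
        congr 1 with x
        rw [mul_add, padicChar_add, mul_comm a]
        ring
    _ = padicChar p (a * ξ) * padicFourier ν f ξ := integral_const_mul _ _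

theorem padicFourier_comp_mul [ν.IsAddHaarMeasure] (c : ℚ_[p]ˣ) :
    padicFourier ν (fun x => f (c * x)) =
      fun ξ => ((distribHaarChar ℚ_[p] c)⁻¹ : ℂ) * padicFourier ν f ((c⁻¹ : ℚ_[p]ˣ) * ξ) := by
  ext ξ
  calc ∫ x, padicChar p (ξ * x) * f (c * x) ∂ν
      = ∫ x, padicChar p ((c⁻¹ : ℚ_[p]ˣ) * ξ * (c • x)) * f (c • x) ∂ν := by
        congr 1 with x
        rw [Units.smul_def, smul_eq_mul, mul_mul_mul_comm, Units.inv_mul, one_mul]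
    _ = (distribHaarChar ℚ_[p] c)⁻¹ • padicFourier ν f ((c⁻¹ : ℚ_[p]ˣ) * ξ) :=
        integral_comp_smul_eq_distribHaarChar_inv_smul ν c
          fun x => padicChar p ((c⁻¹ : ℚ_[p]ˣ) * ξ * x) * f x
    _ = ((distribHaarChar ℚ_[p] c)⁻¹ : ℂ) * padicFourier ν f ((c⁻¹ : ℚ_[p]ˣ) * ξ) := by
        rw [NNReal.smul_def, Complex.real_smul, NNReal.coe_inv, Complex.ofReal_inv]

theorem padicFourier_comp_mul_sub [ν.IsAddHaarMeasure] (c : ℚ_[p]ˣ) (a : ℚ_[p]) :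
    padicFourier ν (fun x => f (c * x - a)) = fun ξ => ((distribHaarChar ℚ_[p] c)⁻¹ : ℂ) *
      (padicChar p (a * ((c⁻¹ : ℚ_[p]ˣ) * ξ)) * padicFourier ν f ((c⁻¹ : ℚ_[p]ˣ) * ξ)) := by
  rw [padicFourier_comp_mul (f := fun y => f (y - a)), padicFourier_comp_sub]

namespace FourierInvertible

theorem const_mul (hf : FourierInvertible ν f) (C : ℂ) :
    FourierInvertible ν fun x => C * f x := by
  intro x
  simp only [padicFourier_const_mul, hf x]

theorem char_mul [ν.IsAddRightInvariant] (hf : FourierInvertible ν f) (b : ℚ_[p]) :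
    FourierInvertible ν fun x => padicChar p (b * x) * f x := by
  intro x
  have translate := padicFourier_comp_sub (ν := ν) (f := padicFourier ν f) (-b)
  simp only [sub_neg_eq_add] at translate
  simp only [padicFourier_char_mul, translate, neg_mul_neg, hf x]

theorem comp_sub [ν.IsAddRightInvariant] (hf : FourierInvertible ν f) (a : ℚ_[p]) :
    FourierInvertible ν fun x => f (x - a) := by
  intro x
  simp only [padicFourier_comp_sub, padicFourier_char_mul, neg_add_eq_sub, ← hf (x - a), neg_sub]

theorem comp_mul [ν.IsAddHaarMeasure] (hf : FourierInvertible ν f) (c : ℚ_[p]ˣ) :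
    FourierInvertible ν fun x => f (c * x) := by
  intro x
  have hc : ((distribHaarChar ℚ_[p] c : NNReal) : ℂ) ≠ 0 := mod_cast distribHaarChar_pos.ne'
  simp only [padicFourier_comp_mul, padicFourier_const_mul, inv_inv, mul_neg, hf (c * x), map_inv,
    NNReal.coe_inv, Complex.ofReal_inv, inv_mul_cancel_left₀ hc]

end FourierInvertible

theorem padicFourier_indZ [ν.IsAddLeftInvariant] (hν : ν {x : ℚ_[p] | ‖x‖ ≤ 1} = 1) :
    padicFourier ν (indZ p) = indZ p := by
  ext ξ
  obtain hξ | hξ := le_or_gt ‖ξ‖ 1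
  · simp only [padicFourier, padicChar_mul_indZ hξ, integral_indZ hν, indZ_of_norm_le_one hξ]
  · obtain ⟨t, ht, char_ne_one⟩ := exists_padicChar_mul_ne_one hξ
    have translate : padicFourier ν (indZ p) ξ
        = padicChar p (t * ξ) * padicFourier ν (indZ p) ξ := by
      conv_lhs => rw [padicFourier, ← integral_add_left_eq_self _ t]
      simp only [mul_add, padicChar_add, indZ_add_of_norm_le_one ht, mul_assoc, mul_comm ξ t,
        integral_const_mul, padicFourier]
    rw [indZ_of_one_lt_norm hξ]
    by_contra hF
    exact char_ne_one ((right_eq_mul₀ hF).1 translate)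

theorem fourierInvertible_indZ [ν.IsAddLeftInvariant] (hν : ν {x : ℚ_[p] | ‖x‖ ≤ 1} = 1) :
    FourierInvertible ν (indZ p) := fun x => by
  rw [padicFourier_indZ hν, padicFourier_indZ hν, indZ_neg]

end LocalFourier

section ComplexPower

theorem ofReal_natCast_zpow_cpow (b : ℕ) (n : ℤ) (γ : ℂ) :
    (((b : ℝ) ^ n : ℝ) : ℂ) ^ γ = (b : ℂ) ^ (γ * n) := by
  rw [Complex.cpow_mul_int]
  obtain ⟨m, rfl | rfl⟩ := n.eq_nat_or_neg
  · rw [zpow_natCast, zpow_natCast, Complex.ofReal_pow, Complex.ofReal_natCast,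
      ← Complex.natCast_cpow_natCast_mul, Complex.cpow_nat_mul]
  · have arg_ne_pi : ((b : ℂ) ^ m).arg ≠ Real.pi := by
      rw [← Nat.cast_pow, Complex.natCast_arg]
      exact Real.pi_ne_zero.symm
    rw [zpow_neg, zpow_neg, zpow_natCast, zpow_natCast, Complex.ofReal_inv, Complex.ofReal_pow,
      Complex.ofReal_natCast, Complex.inv_cpow _ _ arg_ne_pi, ← Complex.natCast_cpow_natCast_mul,
      Complex.cpow_nat_mul]

theorem ofReal_prod_natCast_zpow_cpow {ι : Type*} (s : Finset ι) (b : ι → ℕ) (n : ι → ℤ) (γ : ℂ) :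
    ((∏ i ∈ s, (b i : ℝ) ^ n i : ℝ) : ℂ) ^ γ = ∏ i ∈ s, (b i : ℂ) ^ (γ * n i) := by
  induction s using Finset.induction_on with
  | empty => simp
  | insert i s hi ih =>
    rw [Finset.prod_insert hi, Finset.prod_insert hi, ← ih, Complex.ofReal_mul,
      Complex.mul_cpow_ofReal_nonneg (by positivity) (by positivity), ofReal_natCast_zpow_cpow]

end ComplexPower

section Kozyrev

variable {ν : Measure ℚ_[p]} {k : ℕ} {j : ℤ} {a : ℚ_[p]}

variable (p) in
/-- The prime `p` as a unit of `ℚ_p`; dilations of `ℚ_p` are by units. -/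
def primeUnit : ℚ_[p]ˣ := Units.mk0 (p : ℚ_[p]) (mod_cast (Fact.out : p.Prime).ne_zero)

theorem norm_primeUnit_zpow (n : ℤ) : ‖((primeUnit p ^ n : ℚ_[p]ˣ) : ℚ_[p])‖ = (p : ℝ) ^ (-n) := by
  rw [Units.val_zpow_eq_zpow_val, primeUnit, Units.val_mk0, Padic.norm_p_zpow]

variable (p) in
/-- The mother wavelet `ψ⁰_{k;00}`, of which `kozyrev p k j a` is a normalized dilate and
translate. -/
def kozyrevMother (k : ℕ) (x : ℚ_[p]) : ℂ :=
  padicChar p (k / p * x) * indZ p x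

theorem kozyrev_eq_kozyrevMother (k : ℕ) (j : ℤ) (a : ℚ_[p]) :
    kozyrev p k j a = fun x => ((p : ℝ) ^ ((j : ℝ) / 2) : ℝ) *
      kozyrevMother p k ((primeUnit p ^ (-j) : ℚ_[p]ˣ) * x - a) := by
  ext x
  rw [kozyrev, mul_assoc, Units.val_zpow_eq_zpow_val]
  rfl

theorem measurable_kozyrev : Measurable (kozyrev p k j a) := by
  have := (continuous_padicChar (p := p)).measurable
  have := measurable_indZ (p := p)
  unfold kozyrev
  fun_prop

theorem padicFourier_kozyrevMother [ν.IsAddLeftInvariant] (hν : ν {x : ℚ_[p] | ‖x‖ ≤ 1} = 1)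
    (k : ℕ) : padicFourier ν (kozyrevMother p k) = fun ξ => indZ p (ξ + k / p) :=
  (padicFourier_char_mul _).trans (by rw [padicFourier_indZ hν])

theorem padicFourier_kozyrev [ν.IsAddHaarMeasure] (hν : ν {x : ℚ_[p] | ‖x‖ ≤ 1} = 1)
    (ξ : ℚ_[p]) :
    padicFourier ν (kozyrev p k j a) ξ = ((p : ℝ) ^ ((j : ℝ) / 2) : ℝ) *
      (((distribHaarChar ℚ_[p] (primeUnit p ^ (-j)))⁻¹ : ℂ) *
        (padicChar p (a * ((primeUnit p ^ j : ℚ_[p]ˣ) * ξ)) *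
          indZ p ((primeUnit p ^ j : ℚ_[p]ˣ) * ξ + k / p))) := by
  rw [kozyrev_eq_kozyrevMother, padicFourier_const_mul, padicFourier_comp_mul_sub,
    padicFourier_kozyrevMother hν, zpow_neg, inv_inv]

theorem fourierInvertible_kozyrev [ν.IsAddHaarMeasure] (hν : ν {x : ℚ_[p] | ‖x‖ ≤ 1} = 1) :
    FourierInvertible ν (kozyrev p k j a) := by
  rw [kozyrev_eq_kozyrevMother]
  exact ((((fourierInvertible_indZ hν).char_mul _).comp_sub a).comp_mul _).const_mul _

theorem norm_natCast_div_prime (hk : p.Coprime k) : ‖(k / p : ℚ_[p])‖ = p := by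
  rw [norm_div, Padic.norm_natCast_eq_one_iff.2 hk, Padic.norm_p, one_div, inv_inv]

-- `ψ̂` lives where `‖p ^ j * ξ + k / p‖ ≤ 1`; as `‖k / p‖ = p > 1`, this forces `‖p ^ j * ξ‖ = p`.
theorem norm_eq_of_padicFourier_kozyrev_ne_zero [ν.IsAddHaarMeasure]
    (hν : ν {x : ℚ_[p] | ‖x‖ ≤ 1} = 1) (hk : p.Coprime k) {ξ : ℚ_[p]}
    (hξ : padicFourier ν (kozyrev p k j a) ξ ≠ 0) : ‖ξ‖ = (p : ℝ) ^ (j + 1) := by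
  have hp : (1 : ℝ) < p := mod_cast (Fact.out : p.Prime).one_lt
  have in_ball : ‖(primeUnit p ^ j : ℚ_[p]ˣ) * ξ + k / p‖ ≤ 1 := by
    by_contra! h
    apply hξ
    rw [padicFourier_kozyrev hν, indZ_of_one_lt_norm h, mul_zero, mul_zero, mul_zero]
  have norm_scaled : ‖(primeUnit p ^ j : ℚ_[p]ˣ) * ξ‖ = p := by
    rw [← norm_natCast_div_prime hk] at hp ⊢
    exact Padic.norm_eq_of_norm_add_lt_right (in_ball.trans_lt hp)
  rw [norm_mul, norm_primeUnit_zpow, zpow_neg, inv_mul_eq_iff_eq_mul₀ (by positivity)]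
    at norm_scaled
  rw [norm_scaled, zpow_add_one₀ (by positivity)]

theorem norm_cpow_mul_padicFourier_kozyrev [ν.IsAddHaarMeasure]
    (hν : ν {x : ℚ_[p] | ‖x‖ ≤ 1} = 1) (hk : p.Coprime k) (γ : ℂ) (ξ : ℚ_[p]) :
    ((‖ξ‖ : ℝ) : ℂ) ^ γ * padicFourier ν (kozyrev p k j a) ξ =
      (p : ℂ) ^ (γ * (j + 1)) * padicFourier ν (kozyrev p k j a) ξ := by
  obtain hξ | hξ := eq_or_ne (padicFourier ν (kozyrev p k j a) ξ) 0
  · rw [hξ, mul_zero, mul_zero]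
  · rw [norm_eq_of_padicFourier_kozyrev_ne_zero hν hk hξ, ofReal_natCast_zpow_cpow]
    push_cast
    rfl

end Kozyrev

theorem multipliable_of_eventually_cofinite_eq_one {ι M : Type*} [CommMonoid M]
    [TopologicalSpace M] {u : ι → M} (hu : ∀ᶠ i in cofinite, u i = 1) : Multipliable u :=
  multipliable_of_hasFiniteMulSupport hu

namespace FiniteAdele

instance : Neg FiniteAdele :=
  ⟨fun x => ⟨fun q => -x.1 q, x.2.mono fun q hq => (norm_neg (x.1 q)).trans_le hq⟩⟩

theorem val_neg (x : FiniteAdele) : (-x).1 = -x.1 := rfl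

theorem FtildeInv_eq_Ftilde_neg (μ : Measure FiniteAdele) (f : FiniteAdele → ℂ) (x : FiniteAdele) :
    FtildeInv μ f x = Ftilde μ f (-x) := by
  simp only [FtildeInv, Ftilde, chiTilde, val_neg, Pi.neg_apply, neg_mul, mul_comm]

/-- The factorizable function `x ↦ ∏_q g_q(x_q)`, a finite product at every adele when
`g_q = 1_{ℤ_q}` for almost all `q`. -/
def tensor (g : ∀ q : Nat.Primes, ℚ_[(q : ℕ)] → ℂ) (x : FiniteAdele) : ℂ :=
  ∏' q : Nat.Primes, g q (x.1 q)

variable {f g : ∀ q : Nat.Primes, ℚ_[(q : ℕ)] → ℂ}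

theorem multipliable_apply (hg : ∀ᶠ q in cofinite, g q = indZ q) (x : FiniteAdele) :
    Multipliable fun q => g q (x.1 q) := by
  apply multipliable_of_eventually_cofinite_eq_one
  filter_upwards [hg, x.2] with q hgq hxq
  rw [hgq, indZ_of_norm_le_one hxq]

theorem multipliable_padicChar (ξ x : FiniteAdele) :
    Multipliable fun q : Nat.Primes => padicChar q (ξ.1 q * x.1 q) := by
  apply multipliable_of_eventually_cofinite_eq_one
  filter_upwards [ξ.2, x.2] with q hξ hx
  exact padicChar_eq_one_of_norm_le_one ((PadicInt.subring q).mul_mem hξ hx)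

theorem tensor_mul_tensor (hf : ∀ᶠ q in cofinite, f q = indZ q)
    (hg : ∀ᶠ q in cofinite, g q = indZ q) (x : FiniteAdele) :
    tensor f x * tensor g x = tensor (fun q y => f q y * g q y) x :=
  ((multipliable_apply hf x).tprod_mul (multipliable_apply hg x)).symm

theorem chiTilde_mul_tensor (hg : ∀ᶠ q in cofinite, g q = indZ q) (ξ x : FiniteAdele) :
    chiTilde ξ x * tensor g x = tensor (fun q y => padicChar q (ξ.1 q * y) * g q y) x :=
  ((multipliable_padicChar ξ x).tprod_mul (multipliable_apply hg x)).symm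

/-- The open subring `∏_{q ∈ T} ℚ_q × ∏_{q ∉ T} ℤ_q` of adeles integral outside `T`. -/
def integralOutside (T : Finset Nat.Primes) : Set FiniteAdele :=
  {x | ∀ q ∉ T, ‖x.1 q‖ ≤ 1}

variable {T : Finset Nat.Primes}

theorem measurable_apply (q : Nat.Primes) : Measurable fun x : FiniteAdele => x.1 q :=
  (measurable_pi_apply q).comp measurable_subtype_coe

theorem measurableSet_integralOutside : MeasurableSet (integralOutside T) := by
  have : integralOutside T = ⋂ q : Nat.Primes, ⋂ _ : q ∉ T, {x | ‖x.1 q‖ ≤ 1} := by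
    ext x
    simp [integralOutside]
  rw [this]
  exact .iInter fun q => .iInter fun _ => measurable_apply q measurableSet_norm_le_one

theorem measurable_restrict (T : Finset Nat.Primes) :
    Measurable fun x : FiniteAdele => T.restrict x.1 :=
  (Finset.measurable_restrict T).comp measurable_subtype_coe

theorem tensor_eq_indicator (hg : ∀ q ∉ T, g q = indZ q) :
    tensor g = (integralOutside T).indicator fun x => ∏ q : T, g q (T.restrict x.1 q) := by
  ext x
  by_cases hx : x ∈ integralOutside T
  · rw [Set.indicator_of_mem hx]
    exact (tprod_eq_prod fun q hq => by rw [hg q hq, indZ_of_norm_le_one (hx q hq)]).trans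
      (Finset.prod_coe_sort T fun q => g q (x.1 q)).symm
  · obtain ⟨q, hq, hxq⟩ : ∃ q ∉ T, 1 < ‖x.1 q‖ := by simpa [integralOutside] using hx
    rw [Set.indicator_of_notMem hx, tensor]
    exact tprod_of_exists_eq_zero ⟨q, by rw [hg q hq, indZ_of_one_lt_norm hxq]⟩

/-- `μ` is the restricted product of the measures `μp q` with respect to the subrings `ℤ_q`: it is
multiplicative on boxes `∏_{q ∈ S} B_q × ∏_{q ∉ S} ℤ_q`. -/
def IsRestrictedProduct (μp : ∀ q : Nat.Primes, Measure ℚ_[(q : ℕ)]) (μ : Measure FiniteAdele) :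
    Prop :=
  ∀ S : Finset Nat.Primes, ∀ B : ∀ q : Nat.Primes, Set ℚ_[(q : ℕ)], (∀ q, MeasurableSet (B q)) →
    μ {x : FiniteAdele | (∀ q ∈ S, x.1 q ∈ B q) ∧ ∀ q ∉ S, ‖x.1 q‖ ≤ 1} = ∏ q ∈ S, μp q (B q)

namespace IsRestrictedProduct

variable {μp : ∀ q : Nat.Primes, Measure ℚ_[(q : ℕ)]} {μ : Measure FiniteAdele}

theorem map_restrict_eq_pi [∀ q, SigmaFinite (μp q)] (hμ : IsRestrictedProduct μp μ)
    (T : Finset Nat.Primes) :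
    (μ.restrict (integralOutside T)).map (fun x => T.restrict x.1)
      = Measure.pi fun q : T => μp q := by
  refine (Measure.pi_eq fun s hs => ?_).symm
  let B (q : Nat.Primes) : Set ℚ_[(q : ℕ)] := if hq : q ∈ T then s ⟨q, hq⟩ else Set.univ
  have B_coe (q : T) : B q = s q := dif_pos q.2
  have hB (q : Nat.Primes) : MeasurableSet (B q) := by
    by_cases hq : q ∈ T
    · simpa only [B, dif_pos hq] using hs _
    · simp only [B, dif_neg hq, MeasurableSet.univ]
  have preimage_box : (fun x : FiniteAdele => T.restrict x.1) ⁻¹' Set.univ.pi s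
      ∩ integralOutside T = {x | (∀ q ∈ T, x.1 q ∈ B q) ∧ ∀ q ∉ T, ‖x.1 q‖ ≤ 1} := by
    ext x
    refine and_congr_left fun _ => ?_
    simp only [Set.mem_preimage, Set.mem_univ_pi, Subtype.forall', B_coe, Finset.restrict]
  rw [Measure.map_apply (measurable_restrict T) (.univ_pi hs),
    Measure.restrict_apply (measurable_restrict T (.univ_pi hs)), preimage_box, hμ T B hB,
    ← Finset.prod_coe_sort]
  simp only [B_coe]

theorem integral_tensor_eq_prod [∀ q, SigmaFinite (μp q)] (hμ : IsRestrictedProduct μp μ)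
    (hg_meas : ∀ q, Measurable (g q)) (hg : ∀ q ∉ T, g q = indZ q) :
    ∫ x, tensor g x ∂μ = ∏ q ∈ T, ∫ y, g q y ∂μp q := by
  have prod_meas : Measurable fun y : ∀ q : T, ℚ_[((q : Nat.Primes) : ℕ)] =>
      ∏ q : T, g q (y q) :=
    Finset.measurable_prod _ fun q _ => (hg_meas q).comp (measurable_pi_apply q)
  rw [tensor_eq_indicator hg, integral_indicator measurableSet_integralOutside,
    ← integral_map (measurable_restrict T).aemeasurable prod_meas.aestronglyMeasurable,
    hμ.map_restrict_eq_pi, integral_fintype_prod_eq_prod fun q : T => g q,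
    Finset.prod_coe_sort T fun q => ∫ y, g q y ∂μp q]

theorem integral_tensor [∀ q, SigmaFinite (μp q)] (hμ : IsRestrictedProduct μp μ)
    (hnorm : ∀ q, μp q {x : ℚ_[(q : ℕ)] | ‖x‖ ≤ 1} = 1) (hg_meas : ∀ q, Measurable (g q))
    (hg : ∀ᶠ q in cofinite, g q = indZ q) :
    ∫ x, tensor g x ∂μ = ∏' q, ∫ y, g q y ∂μp q := by
  obtain ⟨T, hT⟩ : ∃ T : Finset Nat.Primes, ∀ q ∉ T, g q = indZ q :=
    ⟨Set.Finite.toFinset hg, fun q hq => not_not.1 fun h => hq ((Set.Finite.mem_toFinset hg).2 h)⟩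
  rw [hμ.integral_tensor_eq_prod hg_meas hT, tprod_eq_prod]
  intro q hq
  rw [hT q hq, integral_indZ (hnorm q)]

theorem Ftilde_tensor [∀ q, SigmaFinite (μp q)] (hμ : IsRestrictedProduct μp μ)
    (hnorm : ∀ q, μp q {x : ℚ_[(q : ℕ)] | ‖x‖ ≤ 1} = 1) (hf_meas : ∀ q, Measurable (f q))
    (hf : ∀ᶠ q in cofinite, f q = indZ q) :
    Ftilde μ (tensor f) = tensor fun q => padicFourier (μp q) (f q) := by
  ext ξ
  simp only [Ftilde, chiTilde_mul_tensor hf]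
  refine hμ.integral_tensor hnorm (fun q => ?_) ?_
  · have := (continuous_padicChar (p := q)).measurable
    have := hf_meas q
    fun_prop
  · filter_upwards [hf, ξ.2] with q hfq hξ
    ext y
    rw [hfq, padicChar_mul_indZ hξ]

theorem FtildeInv_tensor_mul_Ftilde_tensor [∀ q, SigmaFinite (μp q)]
    [∀ q, (μp q).IsAddLeftInvariant] (hμ : IsRestrictedProduct μp μ)
    (hnorm : ∀ q, μp q {x : ℚ_[(q : ℕ)] | ‖x‖ ≤ 1} = 1) (hf_meas : ∀ q, Measurable (f q))
    (hf : ∀ᶠ q in cofinite, f q = indZ q) (hf_inv : ∀ q, FourierInvertible (μp q) (f q))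
    {s : ∀ q : Nat.Primes, ℚ_[(q : ℕ)] → ℂ} (hs : ∀ᶠ q in cofinite, s q = indZ q)
    {c : Nat.Primes → ℂ} (hc : ∀ᶠ q in cofinite, c q = 1)
    (eigen : ∀ q ξ, s q ξ * padicFourier (μp q) (f q) ξ = c q * padicFourier (μp q) (f q) ξ) :
    FtildeInv μ (fun ξ => tensor s ξ * Ftilde μ (tensor f) ξ)
      = fun x => (∏' q, c q) * tensor f x := by
  have hat_eq_indZ : ∀ᶠ q in cofinite, padicFourier (μp q) (f q) = indZ q := by
    filter_upwards [hf] with q hfq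
    rw [hfq, padicFourier_indZ (hnorm q)]
  have scaled_eq_indZ : ∀ᶠ q in cofinite,
      (fun ξ => c q * padicFourier (μp q) (f q) ξ) = indZ q := by
    filter_upwards [hc, hat_eq_indZ] with q hcq hq
    simp only [hcq, hq, one_mul]
  have scaled_meas (q) : Measurable fun ξ => c q * padicFourier (μp q) (f q) ξ :=
    (measurable_padicFourier (hf_meas q)).const_mul (c q)
  ext x
  simp only [FtildeInv_eq_Ftilde_neg, hμ.Ftilde_tensor hnorm hf_meas hf,
    tensor_mul_tensor hs hat_eq_indZ, eigen]
  calc Ftilde μ (tensor fun q ξ => c q * padicFourier (μp q) (f q) ξ) (-x)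
      = ∏' q, padicFourier (μp q) (fun ξ => c q * padicFourier (μp q) (f q) ξ) (-x.1 q) :=
        congrFun (hμ.Ftilde_tensor hnorm scaled_meas scaled_eq_indZ) (-x)
    _ = ∏' q, c q * f q (x.1 q) := by simp only [padicFourier_const_mul, hf_inv _ (x.1 _)]
    _ = (∏' q, c q) * tensor f x :=
        (multipliable_of_eventually_cofinite_eq_one hc).tprod_mul (multipliable_apply hf x)

end IsRestrictedProduct

end FiniteAdele

section Wavelet

/-- The local factors of the adelic wavelet: `PsiWav` is their `FiniteAdele.tensor`. -/
def waveletFactor (m : Nat.Primes) (k : Nat.Primes → ℕ) (j : Nat.Primes → ℤ)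
    (a : ∀ q : Nat.Primes, ℚ_[(q : ℕ)]) (q : Nat.Primes) (x : ℚ_[(q : ℕ)]) : ℂ :=
  if (q : ℕ) ≤ (m : ℕ) then kozyrev q (k q) (j q) (a q) x else indZ q x

/-- The local factors of the symbol of `D^γ`: `symbGamma` is their `FiniteAdele.tensor`. -/
def symbolFactor (m : Nat.Primes) (γ : Nat.Primes → ℂ) (q : Nat.Primes) (ξ : ℚ_[(q : ℕ)]) : ℂ :=
  if (q : ℕ) ≤ (m : ℕ) then ((‖ξ‖ : ℝ) : ℂ) ^ γ q else indZ q ξ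

/-- The eigenvalue of the local factor of `D^γ` at the local factor of the wavelet. -/
def eigenvalueFactor (m : Nat.Primes) (γ : Nat.Primes → ℂ) (j : Nat.Primes → ℤ) (q : Nat.Primes) :
    ℂ :=
  if (q : ℕ) ≤ (m : ℕ) then ((q : ℕ) : ℂ) ^ (γ q * (j q + 1)) else 1

variable {m q : Nat.Primes} {k : Nat.Primes → ℕ} {j : Nat.Primes → ℤ}
  {a : ∀ q : Nat.Primes, ℚ_[(q : ℕ)]} {γ : Nat.Primes → ℂ} {ν : Measure ℚ_[(q : ℕ)]}

theorem eventually_cofinite_lt (m : Nat.Primes) :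
    ∀ᶠ q : Nat.Primes in cofinite, (m : ℕ) < q := by
  have : {q : Nat.Primes | (q : ℕ) ≤ m}.Finite :=
    (Set.finite_Iic (m : ℕ)).preimage Subtype.val_injective.injOn
  filter_upwards [this.eventually_cofinite_notMem] with q hq
  exact not_le.1 hq

theorem waveletFactor_of_le (hq : (q : ℕ) ≤ m) :
    waveletFactor m k j a q = kozyrev q (k q) (j q) (a q) :=
  funext fun _ => if_pos hq

theorem waveletFactor_of_lt (hq : (m : ℕ) < q) : waveletFactor m k j a q = indZ q :=
  funext fun _ => if_neg hq.not_ge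

theorem symbolFactor_of_lt (hq : (m : ℕ) < q) : symbolFactor m γ q = indZ q :=
  funext fun _ => if_neg hq.not_ge

theorem eigenvalueFactor_of_lt (hq : (m : ℕ) < q) : eigenvalueFactor m γ j q = 1 :=
  if_neg hq.not_ge

theorem measurable_waveletFactor : Measurable (waveletFactor m k j a q) := by
  obtain hq | hq := le_or_gt (q : ℕ) m
  · exact waveletFactor_of_le hq ▸ measurable_kozyrev
  · exact waveletFactor_of_lt hq ▸ measurable_indZ

theorem fourierInvertible_waveletFactor [ν.IsAddHaarMeasure]
    (hν : ν {x : ℚ_[(q : ℕ)] | ‖x‖ ≤ 1} = 1) :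
    FourierInvertible ν (waveletFactor m k j a q) := by
  obtain hq | hq := le_or_gt (q : ℕ) m
  · exact waveletFactor_of_le hq ▸ fourierInvertible_kozyrev hν
  · exact waveletFactor_of_lt hq ▸ fourierInvertible_indZ hν

theorem symbolFactor_mul_padicFourier_waveletFactor [ν.IsAddHaarMeasure]
    (hν : ν {x : ℚ_[(q : ℕ)] | ‖x‖ ≤ 1} = 1) (hk : (q : ℕ) ≤ m → (q : ℕ).Coprime (k q))
    (ξ : ℚ_[(q : ℕ)]) :
    symbolFactor m γ q ξ * padicFourier ν (waveletFactor m k j a q) ξ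
      = eigenvalueFactor m γ j q * padicFourier ν (waveletFactor m k j a q) ξ := by
  obtain hq | hq := le_or_gt (q : ℕ) m
  · rw [waveletFactor_of_le hq, symbolFactor, if_pos hq, eigenvalueFactor, if_pos hq,
      norm_cpow_mul_padicFourier_kozyrev hν (hk hq)]
  · rw [waveletFactor_of_lt hq, symbolFactor_of_lt hq, eigenvalueFactor_of_lt hq,
      padicFourier_indZ hν, indZ_mul_self, one_mul]

theorem tprod_eigenvalueFactor {S : Finset Nat.Primes}
    (hS : ∀ q : Nat.Primes, q ∈ S ↔ (q : ℕ) ≤ m) :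
    ∏' q, eigenvalueFactor m γ j q = ∏ q ∈ S, ((q : ℕ) : ℂ) ^ (γ q * (j q + 1)) := by
  rw [tprod_eq_prod fun q hq => eigenvalueFactor_of_lt (not_le.1 ((hS q).not.1 hq))]
  exact Finset.prod_congr rfl fun q hq => if_pos ((hS q).1 hq)

end Wavelet

theorem wavelet_eigenfunction_fractional_general
    (μp : ∀ q : Nat.Primes, Measure ℚ_[(q : ℕ)]) [∀ q, (μp q).IsAddHaarMeasure]
    (hnorm : ∀ q, μp q {x : ℚ_[(q : ℕ)] | ‖x‖ ≤ 1} = 1)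
    (μ : Measure FiniteAdele) (hμ : FiniteAdele.IsRestrictedProduct μp μ)
    (m : Nat.Primes) (S : Finset Nat.Primes) (hS : ∀ q : Nat.Primes, q ∈ S ↔ (q : ℕ) ≤ (m : ℕ))
    (γ : Nat.Primes → ℂ) (k : Nat.Primes → ℕ) (j : Nat.Primes → ℤ)
    (a : ∀ q : Nat.Primes, ℚ_[(q : ℕ)])
    (hk : ∀ q : Nat.Primes, (q : ℕ) ≤ (m : ℕ) → (q : ℕ).Coprime (k q)) :
    (FtildeInv μ (fun ξ => symbGamma m γ ξ * Ftilde μ (PsiWav m k j a) ξ) = fun x =>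
        (∏ q ∈ S, ((q : ℕ) : ℂ) ^ (γ q * ((j q : ℂ) + 1))) * PsiWav m k j a x) ∧
    (∀ γ0 : ℂ, (∀ q ∈ S, γ q = γ0) →
      FtildeInv μ (fun ξ => symbGamma m γ ξ * Ftilde μ (PsiWav m k j a) ξ) = fun x =>
        (((∏ q ∈ S, ((q : ℕ) : ℝ) ^ (j q + 1) : ℝ)) : ℂ) ^ γ0 * PsiWav m k j a x) := by
  have eigen : FtildeInv μ (fun ξ => symbGamma m γ ξ * Ftilde μ (PsiWav m k j a) ξ) = fun x =>
      (∏ q ∈ S, ((q : ℕ) : ℂ) ^ (γ q * ((j q : ℂ) + 1))) * PsiWav m k j a x := by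
    have large := eventually_cofinite_lt m
    rw [← tprod_eigenvalueFactor hS]
    exact hμ.FtildeInv_tensor_mul_Ftilde_tensor hnorm (fun _ => measurable_waveletFactor)
      (large.mono fun _ => waveletFactor_of_lt)
      (fun q => fourierInvertible_waveletFactor (hnorm q))
      (large.mono fun _ => symbolFactor_of_lt) (large.mono fun _ => eigenvalueFactor_of_lt)
      (fun q => symbolFactor_mul_padicFourier_waveletFactor (hnorm q) (hk q))
  refine ⟨eigen, fun γ0 hγ => ?_⟩
  have eigenvalue_eq : ((∏ q ∈ S, ((q : ℕ) : ℝ) ^ (j q + 1) : ℝ) : ℂ) ^ γ0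
      = ∏ q ∈ S, ((q : ℕ) : ℂ) ^ (γ q * ((j q : ℂ) + 1)) := by
    rw [ofReal_prod_natCast_zpow_cpow]
    exact Finset.prod_congr rfl fun q hq => by rw [hγ q hq]; push_cast; rfl
  rw [eigen, eigenvalue_eq]

/-- The wavelet `Ψ` is an eigenfunction of the adelic fractional
operator `D^γ = 𝓕̃⁻¹ ∘ |ξ|^γ ∘ 𝓕̃`, with
`D^γΨ = (∏_{q ≤ m} q^{γ_q(j_q+1)}) Ψ`; in particular, if all `γ_q = γ` then
`D^γΨ = (∏_{q ≤ m} q^{j_q+1})^γ Ψ`.  `μ` is the Haar measure on `Ã` normalized as the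
product of the Haar measures `μ_p` with `μ_p(ℤ_p) = 1`, and `S` is the finite set of
primes `q ≤ m`. -/
theorem wavelet_eigenfunction_fractional
    (μp : ∀ q : Nat.Primes, MeasureTheory.Measure ℚ_[(q : ℕ)])
    (hHaar : ∀ q, (μp q).IsAddHaarMeasure)
    (hnorm : ∀ q, μp q {x : ℚ_[(q : ℕ)] | ‖x‖ ≤ 1} = 1)
    (μ : MeasureTheory.Measure FiniteAdele)
    (hμ : ∀ S : Finset Nat.Primes,
      ∀ B : ∀ q : Nat.Primes, Set ℚ_[(q : ℕ)], (∀ q, MeasurableSet (B q)) →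
      μ {x : FiniteAdele | (∀ q ∈ S, x.1 q ∈ B q) ∧ ∀ q ∉ S, ‖x.1 q‖ ≤ 1}
        = ∏ q ∈ S, μp q (B q))
    (m : Nat.Primes) (S : Finset Nat.Primes)
    (hS : ∀ q : Nat.Primes, q ∈ S ↔ (q : ℕ) ≤ (m : ℕ))
    (γ : Nat.Primes → ℂ)
    (k : Nat.Primes → ℕ) (j : Nat.Primes → ℤ) (a : ∀ q : Nat.Primes, ℚ_[(q : ℕ)])
    (hk : ∀ q : Nat.Primes, (q : ℕ) ≤ (m : ℕ) → 1 ≤ k q ∧ k q ≤ (q : ℕ) - 1)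
    (hj : ∀ q : Nat.Primes, (q : ℕ) ≤ (m : ℕ) → 0 ≤ j q)
    (ha : ∀ q : Nat.Primes, (q : ℕ) ≤ (m : ℕ) → a q ∈ Ip q) :
    (FtildeInv μ (fun ξ => symbGamma m γ ξ * Ftilde μ (PsiWav m k j a) ξ)
      =ᵐ[μ] fun x =>
        (∏ q ∈ S, ((q : ℕ) : ℂ) ^ (γ q * ((j q : ℂ) + 1))) * PsiWav m k j a x) ∧
    (∀ γ0 : ℂ, (∀ q ∈ S, γ q = γ0) →
      FtildeInv μ (fun ξ => symbGamma m γ ξ * Ftilde μ (PsiWav m k j a) ξ)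
        =ᵐ[μ] fun x =>
          (((∏ q ∈ S, ((q : ℕ) : ℝ) ^ (j q + 1) : ℝ)) : ℂ) ^ γ0 * PsiWav m k j a x) := by
  have coprime (q : Nat.Primes) (hq : (q : ℕ) ≤ m) : (q : ℕ).Coprime (k q) :=
    Nat.coprime_of_lt_prime (Nat.ne_zero_of_lt (hk q hq).1)
      (Nat.lt_of_le_pred q.2.pos (hk q hq).2) q.2
  have eigen := wavelet_eigenfunction_fractional_general μp hnorm μ hμ m S hS γ k j a coprime
  exact ⟨.of_eq eigen.1, fun γ0 hγ => .of_eq (eigen.2 γ0 hγ)⟩
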